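/- A hermitian module M ⊆ ℝ[x,y] is archimedean if and only if c − ‖z‖² ∈ M for some real number c, where ‖z‖² := |z_1|² + ⋯ + |z_n|². -/

import Mathlib

open MvPolynomial Complex Matrix MeasureTheory ComplexOrder

noncomputable section

universe u

/-- `ℂ[z,z̄]`: the polynomial ring in the `2n` variables `z_j` (encoded `Sum.inl j`)
and `z̄_j` (encoded `Sum.inr j`). -/
abbrev CPoly (n : ℕ) := MvPolynomial (Fin n ⊕ Fin n) ℂ

/-- The involution `f ↦ f*`: conjugate the coefficients and swap `z_j ↔ z̄_j`. -/
def hermStar (n : ℕ) : CPoly n →+* CPoly n :=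
  (MvPolynomial.rename (Sum.swap : Fin n ⊕ Fin n → Fin n ⊕ Fin n)).toRingHom.comp
    (MvPolynomial.map (starRingEnd ℂ))

/-- The inclusion of the holomorphic polynomials `ℂ[z]` into `ℂ[z,z̄]`. -/
def hol (n : ℕ) : MvPolynomial (Fin n) ℂ →ₐ[ℂ] CPoly n :=
  MvPolynomial.rename Sum.inl

/-- Evaluation `f(a,b)` (substituting `a` for `z` and `b` for `z̄`). -/
def evalPair {n : ℕ} (a b : Fin n → ℂ) (f : CPoly n) : ℂ :=
  MvPolynomial.eval (Sum.elim a b) f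

/-- Evaluation `f(a) := f(a, ā)`. -/
def evalAt {n : ℕ} (a : Fin n → ℂ) (f : CPoly n) : ℂ :=
  evalPair a (fun j => (starRingEnd ℂ) (a j)) f

/-- `‖z‖² = |z_1|² + ⋯ + |z_n|²`. -/
def normZ (n : ℕ) : CPoly n := ∑ j : Fin n, X (Sum.inl j) * X (Sum.inr j)

/-- `Σ_h`: hermitian sums of squares `∑ |p_i|²`, `p_i ∈ ℂ[z]` holomorphic. -/
def SigmaH (n : ℕ) : Set (CPoly n) :=
  {f | ∃ (k : ℕ) (p : Fin k → MvPolynomial (Fin n) ℂ),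
    f = ∑ i, hol n (p i) * hermStar n (hol n (p i))}

/-- `Σ`: sums of squares `∑ |p_i|²`, `p_i ∈ ℂ[z,z̄]`. -/
def SigmaFull (n : ℕ) : Set (CPoly n) :=
  {f | ∃ (k : ℕ) (p : Fin k → CPoly n), f = ∑ i, p i * hermStar n (p i)}

/-- Ideals `I ⊆ ℝ[x,y]`, viewed as sets of `*`-fixed elements of `ℂ[z,z̄]`. -/
def IsRealIdeal (n : ℕ) (I : Set (CPoly n)) : Prop :=
  (∀ f ∈ I, hermStar n f = f) ∧ (0 : CPoly n) ∈ I ∧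
    (∀ f ∈ I, ∀ g ∈ I, f + g ∈ I) ∧
    ∀ f : CPoly n, hermStar n f = f → ∀ g ∈ I, f * g ∈ I

/-- The semiring `Σ_h + I`. -/
def SigmaHPlus (n : ℕ) (I : Set (CPoly n)) : Set (CPoly n) :=
  {f | ∃ s ∈ SigmaH n, ∃ g ∈ I, f = s + g}

/-- The real zero set `V_ℝ(I) ⊆ ℂⁿ`. -/
def VR (n : ℕ) (I : Set (CPoly n)) : Set (Fin n → ℂ) :=
  {a | ∀ f ∈ I, evalAt a f = 0}

/-- A subset `M` of `ℝ[x,y]` is archimedean if for every real `f` there is `c ∈ ℝ`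
with `c ± f ∈ M`. -/
def IsArchSet (n : ℕ) (M : Set (CPoly n)) : Prop :=
  ∀ f : CPoly n, hermStar n f = f →
    ∃ c : ℝ, (C (c : ℂ) + f) ∈ M ∧ (C (c : ℂ) - f) ∈ M

/-- Hermitian modules in `ℝ[x,y]`. -/
def IsHermitianModule (n : ℕ) (M : Set (CPoly n)) : Prop :=
  (∀ f ∈ M, hermStar n f = f) ∧ (1 : CPoly n) ∈ M ∧
    (∀ f ∈ M, ∀ g ∈ M, f + g ∈ M) ∧
    ∀ s ∈ SigmaH n, ∀ f ∈ M, s * f ∈ M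

/-- The closed set `X_M ⊆ ℂⁿ` associated with a hermitian module. -/
def XM (n : ℕ) (M : Set (CPoly n)) : Set (Fin n → ℂ) :=
  {a | ∀ g ∈ M, 0 ≤ (evalAt a g).re}

/-- Hereditary calculus `ψ_T` for a tuple of bounded operators:
`ψ_T(z^α z̄^β) = T^{*β} T^α` (adjoints to the left). -/
def psiOp {n : ℕ} {E : Type u} [NormedAddCommGroup E] [InnerProductSpace ℂ E]
    [CompleteSpace E] (T : Fin n → E →L[ℂ] E) (f : CPoly n) : E →L[ℂ] E :=
  ∑ m ∈ f.support, f.coeff m •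
    ((List.ofFn fun j => (ContinuousLinearMap.adjoint (T j)) ^ (m (Sum.inr j))).prod *
     (List.ofFn fun j => (T j) ^ (m (Sum.inl j))).prod)

/-- Hereditary calculus `ψ_T` for a tuple of matrices. -/
def psiMat {n m : ℕ} (T : Fin n → Matrix (Fin m) (Fin m) ℂ) (f : CPoly n) :
    Matrix (Fin m) (Fin m) ℂ :=
  ∑ mo ∈ f.support, f.coeff mo •
    ((List.ofFn fun j => ((T j)ᴴ) ^ (mo (Sum.inr j))).prod *
     (List.ofFn fun j => (T j) ^ (mo (Sum.inl j))).prod)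

/-- A commuting tuple `T` on a Hilbert space `E` is subnormal if it extends to a
commuting tuple of bounded normal operators on a larger Hilbert space `E'`,
leaving (the image of) `E` invariant. -/
def IsSubnormal {n : ℕ} {E : Type u} [NormedAddCommGroup E] [InnerProductSpace ℂ E]
    [CompleteSpace E] (T : Fin n → E →L[ℂ] E) : Prop :=
  ∃ (E' : Type u) (_ : NormedAddCommGroup E') (_ : InnerProductSpace ℂ E')
    (_ : CompleteSpace E') (ι : E →ₗᵢ[ℂ] E') (N : Fin n → E' →L[ℂ] E'),
      (∀ i j, Commute (N i) (N j)) ∧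
      (∀ j, Commute (N j) (ContinuousLinearMap.adjoint (N j))) ∧
      ∀ j x, N j (ι x) = ι (T j x)

/-- The "diamond" ideal `I(a,b)`. -/
def Iab {n : ℕ} (a b : Fin n → ℂ) : Set (CPoly n) :=
  {f | evalPair a (fun j => (starRingEnd ℂ) (a j)) f = 0 ∧
       evalPair a (fun j => (starRingEnd ℂ) (b j)) f = 0 ∧
       evalPair b (fun j => (starRingEnd ℂ) (a j)) f = 0 ∧
       evalPair b (fun j => (starRingEnd ℂ) (b j)) f = 0}

/-- The degenerate ideal `J(a,U)`. -/
def Jau {n : ℕ} (a : Fin n → ℂ) (U : Matrix (Fin n) (Fin n) ℂ) : Set (CPoly n) :=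
  {f | evalAt a f = 0 ∧
    U.mulVec (fun k => evalAt a (pderiv (Sum.inl k) f)) = 0 ∧
    (U.map (starRingEnd ℂ)).mulVec (fun k => evalAt a (pderiv (Sum.inr k) f)) = 0 ∧
    Matrix.trace
      (U * Matrix.of fun j k => evalAt a (pderiv (Sum.inr k) (pderiv (Sum.inl j) f))) = 0}

/-! The holomorphic polynomials `p` with `c - |p|² ∈ M` for some real `c` form a `ℂ`-subalgebra of
`ℂ[z]`: sums are handled by the parallelogram law and products by
`c * d - |p * q|² = |q|² * (c - |p|²) + c * (d - |q|²)` with `c ≥ 0`. If `c - ‖z‖² ∈ M`, adding the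
squares `|z_k|²` for `k ≠ j` puts each `z_j` in this subalgebra, so it is all of `ℂ[z]`. Every
`*`-fixed polynomial is a sum of terms `p q* + q p*` with `p`, `q` holomorphic, and these are
bounded above because `|p|² + |q|² - (p q* + q p*) = |p - q|²`. -/

@[simp]
theorem hermStar_C (n : ℕ) (a : ℂ) : hermStar n (C a) = C ((starRingEnd ℂ) a) := by
  simp [hermStar]

@[simp]
theorem hermStar_X_inl {n : ℕ} (j : Fin n) : hermStar n (X (Sum.inl j)) = X (Sum.inr j) := by
  simp [hermStar]

@[simp]
theorem hermStar_X_inr {n : ℕ} (j : Fin n) : hermStar n (X (Sum.inr j)) = X (Sum.inl j) := by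
  simp [hermStar]

@[simp]
theorem hermStar_hermStar {n : ℕ} (f : CPoly n) : hermStar n (hermStar n f) = f := by
  induction f using MvPolynomial.induction_on with
  | C a => simp
  | add p q hp hq => simp [hp, hq]
  | mul_X p j hp => cases j <;> simp [hp]

theorem hermStar_normZ (n : ℕ) : hermStar n (normZ n) = normZ n := by
  simp [normZ, mul_comm]

@[simp]
theorem hol_C (n : ℕ) (a : ℂ) : hol n (C a) = C a :=
  rename_C _ a

@[simp]
theorem hol_X {n : ℕ} (j : Fin n) : hol n (X j) = X (Sum.inl j) :=
  rename_X _ j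

theorem exists_monomial_eq_hol_mul_hermStar_hol {n : ℕ} (m : Fin n ⊕ Fin n →₀ ℕ) (a : ℂ) :
    ∃ p q : MvPolynomial (Fin n) ℂ, monomial m a = hol n p * hermStar n (hol n q) := by
  refine induction_on_monomial
    (motive := fun f : CPoly n => ∃ p q, f = hol n p * hermStar n (hol n q)) ?_ ?_ m a
  · exact fun a => ⟨C a, 1, by simp⟩
  · rintro _ (j | j) ⟨p, q, rfl⟩
    · exact ⟨p * X j, q, by simp only [map_mul, hol_X]; ring⟩
    · exact ⟨p, q * X j, by simp only [map_mul, hol_X, hermStar_X_inl]; ring⟩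

/-- The hermitian square `|p|² = p p*` of a holomorphic polynomial `p`, as an element of `ℂ[z,z̄]`.
These squares generate the cone `Σ_h`. -/
def hermSq {n : ℕ} (p : MvPolynomial (Fin n) ℂ) : CPoly n :=
  hol n p * hermStar n (hol n p)

section hermSq

variable {n : ℕ}

theorem hermSq_mem_SigmaH (p : MvPolynomial (Fin n) ℂ) : hermSq p ∈ SigmaH n :=
  ⟨1, fun _ => p, by simp [hermSq]⟩

theorem hermSq_C (a : ℂ) : hermSq (C a : MvPolynomial (Fin n) ℂ) = C (normSq a : ℂ) := by
  rw [hermSq, hol_C, hermStar_C, ← C_mul, mul_conj]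

theorem hermSq_mul (p q : MvPolynomial (Fin n) ℂ) : hermSq (p * q) = hermSq p * hermSq q := by
  simp only [hermSq, map_mul]
  ring

theorem hermSq_sub (p q : MvPolynomial (Fin n) ℂ) :
    hermSq (p - q) = hermSq p + hermSq q -
      (hol n p * hermStar n (hol n q) + hermStar n (hol n p * hermStar n (hol n q))) := by
  simp only [hermSq, map_sub, map_mul, hermStar_hermStar]
  ring

theorem hermSq_add_add_hermSq_sub (p q : MvPolynomial (Fin n) ℂ) :
    hermSq (p + q) + hermSq (p - q) = 2 * (hermSq p + hermSq q) := by
  simp only [hermSq, map_add, map_sub]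
  ring

theorem normZ_eq_sum_hermSq_X (n : ℕ) : normZ n = ∑ j, hermSq (X j) := by
  simp [normZ, hermSq]

end hermSq

namespace IsHermitianModule

variable {n : ℕ} {M : Set (CPoly n)}

theorem one_mem (hM : IsHermitianModule n M) : (1 : CPoly n) ∈ M :=
  hM.2.1

theorem add_mem (hM : IsHermitianModule n M) {f g : CPoly n} (hf : f ∈ M) (hg : g ∈ M) :
    f + g ∈ M :=
  hM.2.2.1 f hf g hg

theorem hermSq_mul_mem (hM : IsHermitianModule n M) (p : MvPolynomial (Fin n) ℂ) {f : CPoly n}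
    (hf : f ∈ M) : hermSq p * f ∈ M :=
  hM.2.2.2 _ (hermSq_mem_SigmaH p) f hf

theorem hermSq_mem (hM : IsHermitianModule n M) (p : MvPolynomial (Fin n) ℂ) : hermSq p ∈ M := by
  simpa using hM.hermSq_mul_mem p hM.one_mem

theorem C_mul_mem (hM : IsHermitianModule n M) {r : ℝ} (hr : 0 ≤ r) {f : CPoly n} (hf : f ∈ M) :
    C (r : ℂ) * f ∈ M := by
  have h := hM.hermSq_mul_mem (C (√r : ℂ)) hf
  rwa [hermSq_C, normSq_ofReal, Real.mul_self_sqrt hr] at h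

theorem C_mem (hM : IsHermitianModule n M) {r : ℝ} (hr : 0 ≤ r) : C (r : ℂ) ∈ M := by
  simpa using hM.C_mul_mem hr hM.one_mem

theorem zero_mem (hM : IsHermitianModule n M) : (0 : CPoly n) ∈ M := by
  simpa using hM.C_mem le_rfl

theorem sum_mem (hM : IsHermitianModule n M) {ι : Type*} {s : Finset ι} {f : ι → CPoly n}
    (hf : ∀ i ∈ s, f i ∈ M) : ∑ i ∈ s, f i ∈ M :=
  Finset.sum_induction f (· ∈ M) (fun _ _ => hM.add_mem) hM.zero_mem hf

theorem C_sub_mem_mono (hM : IsHermitianModule n M) {c d : ℝ} (hcd : c ≤ d) {f : CPoly n}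
    (hf : C (c : ℂ) - f ∈ M) : C (d : ℂ) - f ∈ M := by
  convert hM.add_mem (hM.C_mem (sub_nonneg.2 hcd)) hf using 1
  simp only [ofReal_sub, map_sub]
  ring

/-- The algebra of holomorphic polynomials bounded with respect to `M`: those `p` with
`c - |p|² ∈ M` for some real `c`. -/
def boundedSubalgebra (hM : IsHermitianModule n M) :
    Subalgebra ℂ (MvPolynomial (Fin n) ℂ) where
  carrier := {p | ∃ c : ℝ, C (c : ℂ) - hermSq p ∈ M}
  algebraMap_mem' a := ⟨normSq a, by simpa [algebraMap_eq, hermSq_C] using hM.zero_mem⟩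
  add_mem' := by
    rintro p q ⟨c, hp⟩ ⟨d, hq⟩
    have h := hM.add_mem (hM.C_mul_mem zero_le_two (hM.add_mem hp hq)) (hM.hermSq_mem (p - q))
    refine ⟨2 * (c + d), ?_⟩
    convert h using 1
    rw [eq_sub_of_add_eq (hermSq_add_add_hermSq_sub p q)]
    simp only [ofReal_mul, ofReal_add, ofReal_ofNat, map_mul, map_add, map_ofNat]
    ring
  mul_mem' := by
    rintro p q ⟨c, hp⟩ ⟨d, hq⟩
    have hp' := hM.C_sub_mem_mono (le_max_left c 0) hp
    have h := hM.add_mem (hM.hermSq_mul_mem q hp') (hM.C_mul_mem (le_max_right c 0) hq)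
    refine ⟨max c 0 * d, ?_⟩
    convert h using 1
    rw [hermSq_mul, ofReal_mul, map_mul]
    ring

theorem X_mem_boundedSubalgebra (hM : IsHermitianModule n M) {c : ℝ}
    (hc : C (c : ℂ) - normZ n ∈ M) (j : Fin n) : X j ∈ hM.boundedSubalgebra := by
  have hrest : ∑ k ∈ Finset.univ.erase j, hermSq (X k) ∈ M :=
    hM.sum_mem fun k _ => hM.hermSq_mem (X k)
  refine ⟨c, ?_⟩
  convert hM.add_mem hc hrest using 1
  rw [normZ_eq_sum_hermSq_X, ← Finset.add_sum_erase _ _ (Finset.mem_univ j)]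
  ring

theorem boundedSubalgebra_eq_top (hM : IsHermitianModule n M) {c : ℝ}
    (hc : C (c : ℂ) - normZ n ∈ M) : hM.boundedSubalgebra = ⊤ := by
  rw [eq_top_iff, ← adjoin_range_X, Algebra.adjoin_le_iff]
  exact Set.range_subset_iff.2 (hM.X_mem_boundedSubalgebra hc)

theorem exists_C_sub_add_hermStar_mem (hM : IsHermitianModule n M)
    (htop : hM.boundedSubalgebra = ⊤) (f : CPoly n) :
    ∃ c : ℝ, C (c : ℂ) - (f + hermStar n f) ∈ M := by
  have hbounded (p) : p ∈ hM.boundedSubalgebra := htop ▸ Algebra.mem_top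
  induction f using MvPolynomial.induction_on' with
  | monomial m a =>
    obtain ⟨p, q, hpq⟩ := exists_monomial_eq_hol_mul_hermStar_hol m a
    obtain ⟨c, hp⟩ := hbounded p
    obtain ⟨d, hq⟩ := hbounded q
    refine ⟨c + d, ?_⟩
    convert hM.add_mem (hM.add_mem hp hq) (hM.hermSq_mem (p - q)) using 1
    rw [hpq, hermSq_sub, ofReal_add, map_add C]
    ring
  | add f g hf hg =>
    obtain ⟨c, hf⟩ := hf
    obtain ⟨d, hg⟩ := hg
    refine ⟨c + d, ?_⟩
    convert hM.add_mem hf hg using 1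
    simp only [ofReal_add, map_add]
    ring

theorem exists_C_sub_mem (hM : IsHermitianModule n M) (htop : hM.boundedSubalgebra = ⊤)
    {f : CPoly n} (hf : hermStar n f = f) : ∃ c : ℝ, C (c : ℂ) - f ∈ M := by
  have hconj : (starRingEnd ℂ) (1 / 2) = 1 / 2 := by rw [map_div₀, map_one, conj_ofNat]
  have hhalf : C (1 / 2) * f + hermStar n (C (1 / 2) * f) = f := by
    rw [map_mul, hf, hermStar_C, hconj, ← add_mul, ← C_add, add_halves, C_1, one_mul]
  obtain ⟨c, hc⟩ := hM.exists_C_sub_add_hermStar_mem htop (C (1 / 2) * f)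
  exact ⟨c, hhalf ▸ hc⟩

theorem isArchSet_of_boundedSubalgebra_eq_top (hM : IsHermitianModule n M)
    (htop : hM.boundedSubalgebra = ⊤) : IsArchSet n M := by
  intro f hf
  obtain ⟨c, hc⟩ := hM.exists_C_sub_mem htop (f := -f) (by rw [map_neg, hf])
  obtain ⟨d, hd⟩ := hM.exists_C_sub_mem htop hf
  refine ⟨max c d, ?_, hM.C_sub_mem_mono (le_max_right c d) hd⟩
  simpa only [sub_neg_eq_add] using hM.C_sub_mem_mono (le_max_left c d) hc

end IsHermitianModule

/-- Lemma `archhermmod`: a hermitian module `M ⊆ ℝ[x,y]` is archimedean iff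
`c - ‖z‖² ∈ M` for some real `c`. -/
theorem statement12 (n : ℕ) (hn : 0 < n) (M : Set (CPoly n))
    (hM : IsHermitianModule n M) :
    IsArchSet n M ↔ ∃ c : ℝ, C (c : ℂ) - normZ n ∈ M := by
  constructor
  · intro harch
    obtain ⟨c, -, hc⟩ := harch (normZ n) (hermStar_normZ n)
    exact ⟨c, hc⟩
  · rintro ⟨c, hc⟩
    exact hM.isArchSet_of_boundedSubalgebra_eq_top (hM.boundedSubalgebra_eq_top hc)

end
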